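/- (Pick's theorem) Let λ₁,…,λ_N be distinct points of 𝔻 and let w₁,…,w_N ∈ ℂ. There exists an analytic function φ : 𝔻 → ℂ with sup_{𝔻}|φ| ≤ 1 and φ(λ_i) = w_i for i = 1,…,N if and only if the N×N matrix whose (i,j) entry is (1 − w_i w̄_j)/(1 − λ_i λ̄_j) is positive semi-definite. -/

import Mathlib

open Metric Matrix
open scoped ComplexOrder

/-!
The proof is the Schur algorithm. It runs most smoothly on the tangential problem
`x i * φ (lam i) = y i`, whose matrix has entries
`(x i * conj (x j) - y i * conj (y j)) / (1 - lam i * conj (lam j))`; Pick's theorem is `x = 1`.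
If `φ` is in the Schur class and `c = φ a` has modulus `< 1`, then by the Schwarz lemma
`(φ - c) / (1 - conj c * φ) = b * ψ`, where `b` is the Blaschke factor at `a` and `ψ` is again in
the Schur class, and every such `ψ` arises. With `a = lam k`, this trades the problem for `φ` for a
tangential problem for `ψ` in which `x k` has become zero. On the matrix side the same step is, up
to a positive scalar, the Schur complement of the `k`-th diagonal entry, so it preserves positivity
in both directions. The algorithm stops when `‖y i‖ = ‖x i‖` for all `i`, where the solution is a
unimodular constant by the maximum principle.
-/

open scoped ComplexConjugate

section PosSemidef

variable {n 𝕜 : Type*} [RCLike 𝕜] {K : Matrix n n 𝕜} {k : n}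

theorem posSemidef_smul_iff {r : ℝ} (hr : 0 < r) : (r • K).PosSemidef ↔ K.PosSemidef :=
  ⟨fun h => by simpa [smul_smul, hr.ne'] using h.smul (inv_nonneg.mpr hr.le), (·.smul hr.le)⟩

variable [Finite n]

theorem posSemidef_apply_eq_zero_of_diag_eq_zero (hK : K.PosSemidef) (hk : K k k = 0) (i : n) :
    K i k = 0 := by
  classical
  have := Fintype.ofFinite n
  have hcol : K *ᵥ Pi.single k 1 = 0 :=
    (hK.dotProduct_mulVec_zero_iff _).mp (by simp [hk])
  simpa using congrFun hcol i

theorem posSemidef_iff_posSemidef_schurComplement (hK : K.IsHermitian) (hk : 0 < K k k) :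
    K.PosSemidef ↔ (of fun i j => K i j - K i k * K k j / K k k).PosSemidef := by
  classical
  have := Fintype.ofFinite n
  constructor
  · intro h
    convert h.mul_mul_conjTranspose_same
      (1 - vecMulVec (fun i => K i k / K k k) (Pi.single k 1)) using 1
    ext i j
    have hne : K k k ≠ 0 := hk.ne'
    suffices K i j - K i k * K k j / K k k = K i j - K i k / K k k * K k j -
        (K i k * (K k j / K k k) - K i k / K k k * K k k * (K k j / K k k)) by
      simpa [sub_mul, mul_sub, vecMulVec_mul, mul_vecMulVec, vecMulVec_apply, hK.apply]
    field_simp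
    ring
  · intro h
    convert h.add ((posSemidef_vecMulVec_self_star fun i => K i k).smul
      (RCLike.inv_pos_of_pos hk).le) using 1
    ext i j
    simp only [Matrix.add_apply, of_apply, Matrix.smul_apply, vecMulVec_apply, Pi.star_apply,
      hK.apply, smul_eq_mul]
    ring

end PosSemidef

section Blaschke

/-- The Blaschke factor with zero `a`: for `‖a‖ < 1`, an automorphism of the unit disk sending `a`
to `0`, used to move interpolation conditions to the origin. It is not normalized to be positive at
the origin, so that its inverse is `blaschkeFactor (-a)`. -/
noncomputable def blaschkeFactor (a z : ℂ) : ℂ := (z - a) / (1 - conj a * z)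

variable {a z u : ℂ}

theorem one_sub_mul_ne_zero {R : Type*} [NormedRing R] [NormOneClass R] {a z : R}
    (ha : ‖a‖ < 1) (hz : ‖z‖ ≤ 1) : 1 - a * z ≠ 0 := by
  refine sub_ne_zero.mpr fun h => ?_
  have hlt : ‖a * z‖ < 1 :=
    (norm_mul_le a z).trans_lt (mul_lt_one_of_nonneg_of_lt_one_left (norm_nonneg a) ha hz)
  simp [← h] at hlt

theorem one_sub_conj_mul_ne_zero (ha : ‖a‖ < 1) (hz : ‖z‖ ≤ 1) : 1 - conj a * z ≠ 0 :=
  one_sub_mul_ne_zero (by simpa using ha) hz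

theorem one_sub_mul_conj_ne_zero (ha : ‖a‖ < 1) (hz : ‖z‖ ≤ 1) : 1 - a * conj z ≠ 0 :=
  one_sub_mul_ne_zero ha (by simpa using hz)

@[simp]
theorem blaschkeFactor_self (a : ℂ) : blaschkeFactor a a = 0 := by simp [blaschkeFactor]

theorem one_sub_blaschkeFactor_mul_conj (ha : ‖a‖ < 1) (hz : ‖z‖ ≤ 1) (hu : ‖u‖ ≤ 1) :
    1 - blaschkeFactor a z * conj (blaschkeFactor a u) =
      (1 - a * conj a) * (1 - z * conj u) / ((1 - conj a * z) * (1 - a * conj u)) := by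
  have hz' := one_sub_conj_mul_ne_zero ha hz
  have hu' := one_sub_mul_conj_ne_zero ha hu
  simp only [blaschkeFactor, map_div₀, map_sub, map_mul, map_one, Complex.conj_conj]
  rw [div_mul_div_comm, one_sub_div (mul_ne_zero hz' hu')]
  ring

theorem one_sub_norm_blaschkeFactor_sq (ha : ‖a‖ < 1) (hz : ‖z‖ ≤ 1) :
    1 - ‖blaschkeFactor a z‖ ^ 2 =
      (1 - ‖a‖ ^ 2) * (1 - ‖z‖ ^ 2) / ‖1 - conj a * z‖ ^ 2 := by
  have h := one_sub_blaschkeFactor_mul_conj ha hz hz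
  have hconj : 1 - a * conj z = conj (1 - conj a * z) := by simp
  rw [hconj] at h
  simp only [Complex.mul_conj'] at h
  exact_mod_cast h

theorem norm_blaschkeFactor_le_one (ha : ‖a‖ < 1) (hz : ‖z‖ ≤ 1) : ‖blaschkeFactor a z‖ ≤ 1 := by
  have ha' : 0 ≤ 1 - ‖a‖ ^ 2 := sub_nonneg.mpr (pow_le_one₀ (norm_nonneg a) ha.le)
  have hz' : 0 ≤ 1 - ‖z‖ ^ 2 := sub_nonneg.mpr (pow_le_one₀ (norm_nonneg z) hz)
  rw [← sq_le_one_iff₀ (norm_nonneg _), ← sub_nonneg, one_sub_norm_blaschkeFactor_sq ha hz]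
  positivity

theorem norm_blaschkeFactor_lt_one (ha : ‖a‖ < 1) (hz : ‖z‖ < 1) : ‖blaschkeFactor a z‖ < 1 := by
  have ha' : 0 < 1 - ‖a‖ ^ 2 := sub_pos.mpr (pow_lt_one₀ (norm_nonneg a) ha two_ne_zero)
  have hz' : 0 < 1 - ‖z‖ ^ 2 := sub_pos.mpr (pow_lt_one₀ (norm_nonneg z) hz two_ne_zero)
  have hden := one_sub_conj_mul_ne_zero ha hz.le
  rw [← sq_lt_one_iff₀ (norm_nonneg _), ← sub_pos, one_sub_norm_blaschkeFactor_sq ha hz.le]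
  positivity

theorem blaschkeFactor_neg_blaschkeFactor (ha : ‖a‖ < 1) (hz : ‖z‖ ≤ 1) :
    blaschkeFactor (-a) (blaschkeFactor a z) = z := by
  have hden := one_sub_conj_mul_ne_zero ha hz
  have ha' := one_sub_conj_mul_ne_zero ha ha.le
  have hnum : blaschkeFactor a z - -a = z * (1 - conj a * a) / (1 - conj a * z) := by
    rw [blaschkeFactor, eq_div_iff hden, sub_mul, div_mul_cancel₀ _ hden]
    ring
  have hden' : 1 - conj (-a) * blaschkeFactor a z = (1 - conj a * a) / (1 - conj a * z) := by
    rw [blaschkeFactor, eq_div_iff hden, sub_mul, mul_assoc, div_mul_cancel₀ _ hden, map_neg]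
    ring
  rw [blaschkeFactor, hnum, hden', div_div_div_cancel_right₀ hden, mul_div_cancel_right₀ _ ha']

theorem mapsTo_blaschkeFactor_ball (ha : ‖a‖ < 1) :
    Set.MapsTo (blaschkeFactor a) (ball 0 1) (ball 0 1) := fun _ hz =>
  mem_ball_zero_iff.mpr (norm_blaschkeFactor_lt_one ha (mem_ball_zero_iff.mp hz))

end Blaschke

section SchurClass

/-- The Schur class: holomorphic functions on the open unit disk bounded by `1` there. Values
outside the disk are unconstrained. -/
structure IsSchur (φ : ℂ → ℂ) : Prop where
  differentiableOn : DifferentiableOn ℂ φ (ball 0 1)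
  norm_le_one : ∀ z ∈ ball (0 : ℂ) 1, ‖φ z‖ ≤ 1

variable {φ ψ : ℂ → ℂ} {a c : ℂ}

theorem isSchur_iff :
    IsSchur φ ↔ DifferentiableOn ℂ φ (ball 0 1) ∧ ∀ z ∈ ball (0 : ℂ) 1, ‖φ z‖ ≤ 1 :=
  ⟨fun h => ⟨h.1, h.2⟩, fun h => ⟨h.1, h.2⟩⟩

theorem isSchur_id : IsSchur id :=
  ⟨differentiableOn_id, fun _ hz => (mem_ball_zero_iff.mp hz).le⟩

theorem isSchur_const (hc : ‖c‖ ≤ 1) : IsSchur fun _ => c :=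
  ⟨differentiableOn_const c, fun _ _ => hc⟩

theorem IsSchur.mul (hφ : IsSchur φ) (hψ : IsSchur ψ) : IsSchur fun z => φ z * ψ z where
  differentiableOn := hφ.differentiableOn.mul hψ.differentiableOn
  norm_le_one z hz := by
    rw [norm_mul]
    exact mul_le_one₀ (hφ.norm_le_one z hz) (norm_nonneg _) (hψ.norm_le_one z hz)

theorem IsSchur.blaschkeFactor_comp (hφ : IsSchur φ) (hc : ‖c‖ < 1) :
    IsSchur fun z => blaschkeFactor c (φ z) where
  differentiableOn := (hφ.differentiableOn.sub_const c).div
    ((hφ.differentiableOn.const_mul _).const_sub 1)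
    fun z hz => one_sub_conj_mul_ne_zero hc (hφ.norm_le_one z hz)
  norm_le_one z hz := norm_blaschkeFactor_le_one hc (hφ.norm_le_one z hz)

theorem isSchur_blaschkeFactor (ha : ‖a‖ < 1) : IsSchur (blaschkeFactor a) :=
  isSchur_id.blaschkeFactor_comp ha

theorem IsSchur.comp_blaschkeFactor (hφ : IsSchur φ) (ha : ‖a‖ < 1) :
    IsSchur fun z => φ (blaschkeFactor a z) where
  differentiableOn := hφ.differentiableOn.comp (isSchur_blaschkeFactor ha).differentiableOn
    (mapsTo_blaschkeFactor_ball ha)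
  norm_le_one _ hz := hφ.norm_le_one _ (mapsTo_blaschkeFactor_ball ha hz)

theorem IsSchur.dslope_zero (hφ : IsSchur φ) (h0 : φ 0 = 0) : IsSchur (dslope φ 0) where
  differentiableOn :=
    (Complex.differentiableOn_dslope (ball_mem_nhds 0 one_pos)).mpr hφ.differentiableOn
  norm_le_one z hz := by
    have hmaps : Set.MapsTo φ (ball 0 1) (closedBall (φ 0) 1) := fun u hu => by
      simpa [h0] using hφ.norm_le_one u hu
    simpa using Complex.norm_dslope_le_div_of_mapsTo_ball hφ.differentiableOn hmaps hz

theorem IsSchur.eq_of_norm_eq_one (hφ : IsSchur φ) {z : ℂ} (ha : a ∈ ball (0 : ℂ) 1)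
    (hz : z ∈ ball (0 : ℂ) 1) (h : ‖φ a‖ = 1) : φ z = φ a :=
  Complex.eqOn_of_isPreconnected_of_isMaxOn_norm (convex_ball 0 1).isPreconnected isOpen_ball
    hφ.differentiableOn ha (fun u hu => by simpa [h] using hφ.norm_le_one u hu) hz

theorem IsSchur.exists_eq_blaschkeFactor_mul (hφ : IsSchur φ) (ha : ‖a‖ < 1) (h : φ a = 0) :
    ∃ ψ, IsSchur ψ ∧ ∀ z ∈ ball (0 : ℂ) 1, φ z = blaschkeFactor a z * ψ z := by
  have ha' : ‖-a‖ < 1 := by rwa [norm_neg]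
  set χ : ℂ → ℂ := fun z => φ (blaschkeFactor (-a) z)
  have hχ0 : χ 0 = 0 := by simp [χ, blaschkeFactor, h]
  refine ⟨fun z => dslope χ 0 (blaschkeFactor a z),
    ((hφ.comp_blaschkeFactor ha').dslope_zero hχ0).comp_blaschkeFactor ha, fun z hz => ?_⟩
  have hχ : χ (blaschkeFactor a z) = φ z :=
    congrArg φ (blaschkeFactor_neg_blaschkeFactor ha (mem_ball_zero_iff.mp hz).le)
  simpa [hχ, hχ0] using (sub_smul_dslope χ 0 (blaschkeFactor a z)).symm

end SchurClass

section TangentialProblem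

variable {ι : Type*} {lam x y : ι → ℂ} {k : ι}

/-- Solvability of the tangential Nevanlinna–Pick problem: some Schur function `φ` satisfies
`x i * φ (lam i) = y i` for all `i`. -/
def HasSchurInterpolant (lam x y : ι → ℂ) : Prop :=
  ∃ φ, IsSchur φ ∧ ∀ i, x i * φ (lam i) = y i

/-- The Pick matrix of the tangential problem `x i * φ (lam i) = y i`; the classical Pick matrix is
the case `x = 1`. -/
noncomputable def pickMatrix (lam x y : ι → ℂ) : Matrix ι ι ℂ :=
  of fun i j => (x i * conj (x j) - y i * conj (y j)) / (1 - lam i * conj (lam j))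

theorem isHermitian_pickMatrix (lam x y : ι → ℂ) : (pickMatrix lam x y).IsHermitian := by
  ext i j
  simp [pickMatrix, mul_comm]

theorem pickMatrix_apply_self (lam x y : ι → ℂ) (i : ι) :
    pickMatrix lam x y i i = ((‖x i‖ ^ 2 - ‖y i‖ ^ 2) / (1 - ‖lam i‖ ^ 2) : ℝ) := by
  simp [pickMatrix, Complex.mul_conj']

theorem HasSchurInterpolant.norm_le (h : HasSchurInterpolant lam x y) (hlam : ∀ i, ‖lam i‖ < 1)
    (i : ι) : ‖y i‖ ≤ ‖x i‖ := by
  obtain ⟨φ, hφ, hxy⟩ := h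
  rw [← hxy i, norm_mul]
  exact mul_le_of_le_one_right (norm_nonneg _)
    (hφ.norm_le_one _ (mem_ball_zero_iff.mpr (hlam i)))

theorem norm_le_of_posSemidef_pickMatrix (h : (pickMatrix lam x y).PosSemidef)
    (hlam : ∀ i, ‖lam i‖ < 1) (i : ι) : ‖y i‖ ≤ ‖x i‖ := by
  have hdiag : 0 ≤ pickMatrix lam x y i i := h.diag_nonneg
  have hden : 0 < 1 - ‖lam i‖ ^ 2 :=
    sub_pos.mpr (pow_lt_one₀ (norm_nonneg _) (hlam i) two_ne_zero)
  rw [pickMatrix_apply_self, Complex.zero_le_real, le_div_iff₀ hden, zero_mul, sub_nonneg] at hdiag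
  exact le_of_sq_le_sq hdiag (norm_nonneg _)

theorem hasSchurInterpolant_iff_of_norm_eq (hlam : ∀ i, ‖lam i‖ < 1)
    (hxy : ∀ i, ‖y i‖ = ‖x i‖) :
    HasSchurInterpolant lam x y ↔ ∃ c : ℂ, ‖c‖ = 1 ∧ ∀ i, c * x i = y i := by
  constructor
  · rintro ⟨φ, hφ, hφy⟩
    by_cases hx : ∃ k, x k ≠ 0
    · obtain ⟨k, hk⟩ := hx
      have hnorm : ‖φ (lam k)‖ = 1 := by
        have h := hxy k
        rwa [← hφy k, norm_mul, mul_eq_left₀ (norm_ne_zero_iff.mpr hk)] at h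
      refine ⟨φ (lam k), hnorm, fun i => ?_⟩
      rw [← hφy i, mul_comm, hφ.eq_of_norm_eq_one (mem_ball_zero_iff.mpr (hlam k))
        (mem_ball_zero_iff.mpr (hlam i)) hnorm]
    · push Not at hx
      exact ⟨1, norm_one, fun i => by simp [← hφy i, hx i]⟩
  · rintro ⟨c, hc, hcy⟩
    exact ⟨fun _ => c, isSchur_const hc.le, fun i => by rw [mul_comm, hcy i]⟩

theorem posSemidef_pickMatrix_iff_of_norm_eq [Finite ι] (hlam : ∀ i, ‖lam i‖ < 1)
    (hxy : ∀ i, ‖y i‖ = ‖x i‖) :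
    (pickMatrix lam x y).PosSemidef ↔ ∃ c : ℂ, ‖c‖ = 1 ∧ ∀ i, c * x i = y i := by
  constructor
  · intro h
    by_cases hx : ∃ k, x k ≠ 0
    · obtain ⟨k, hk⟩ := hx
      refine ⟨y k / x k, by rw [norm_div, hxy, div_self (norm_ne_zero_iff.mpr hk)], fun i => ?_⟩
      have hkk : y k * conj (y k) = x k * conj (x k) := by simp [Complex.mul_conj', hxy]
      have hik : x i * conj (x k) - y i * conj (y k) = 0 := by
        have hcol : pickMatrix lam x y i k = 0 :=
          posSemidef_apply_eq_zero_of_diag_eq_zero h (by simp [pickMatrix_apply_self, hxy]) i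
        exact (div_eq_zero_iff.mp hcol).resolve_right
          (one_sub_mul_conj_ne_zero (hlam i) (hlam k).le)
      have hk' : conj (x k) ≠ 0 := by simpa using hk
      rw [div_mul_eq_mul_div, div_eq_iff hk]
      refine mul_right_cancel₀ hk' ?_
      linear_combination y k * hik + y i * hkk
    · push Not at hx
      have hy (i : ι) : y i = 0 := by simpa [hx i] using hxy i
      exact ⟨1, norm_one, fun i => by simp [hx i, hy i]⟩
  · rintro ⟨c, hc, hcy⟩
    have hcc : c * conj c = 1 := by simp [Complex.mul_conj', hc]
    have hzero : pickMatrix lam x y = 0 := by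
      ext i j
      refine div_eq_zero_iff.mpr (Or.inl ?_)
      rw [← hcy i, ← hcy j, map_mul]
      linear_combination -(x i * conj (x j)) * hcc
    rw [hzero]
    exact PosSemidef.zero

theorem norm_div_lt_one_of_norm_lt {𝕜 : Type*} [NormedDivisionRing 𝕜] {a b : 𝕜}
    (h : ‖a‖ < ‖b‖) : ‖a / b‖ < 1 := by
  rwa [norm_div, div_lt_one ((norm_nonneg a).trans_lt h)]

/-- The left coefficients of the tangential problem for `ψ` obtained from `x i * φ (lam i) = y i`
by the substitution `blaschkeFactor c (φ z) = blaschkeFactor (lam k) z * ψ z`, where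
`c = y k / x k` is the value of `φ` at `lam k`. It is meant for `x k ≠ 0`. -/
noncomputable def schurStepLeft (lam x y : ι → ℂ) (k i : ι) : ℂ :=
  blaschkeFactor (lam k) (lam i) * (x i - conj (y k / x k) * y i)

/-- The right-hand sides of the tangential problem with left coefficients `schurStepLeft`. -/
noncomputable def schurStepRight (x y : ι → ℂ) (k i : ι) : ℂ := y i - y k / x k * x i

theorem hasSchurInterpolant_schurStep_iff (hlam : ∀ i, ‖lam i‖ < 1) (hk : ‖y k‖ < ‖x k‖) :
    HasSchurInterpolant lam (schurStepLeft lam x y k) (schurStepRight x y k) ↔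
      HasSchurInterpolant lam x y := by
  have hxk : x k ≠ 0 := norm_pos_iff.mp ((norm_nonneg _).trans_lt hk)
  have hmem (i : ι) : lam i ∈ ball (0 : ℂ) 1 := mem_ball_zero_iff.mpr (hlam i)
  unfold HasSchurInterpolant schurStepLeft schurStepRight
  set c : ℂ := y k / x k with hc_def
  have hc : ‖c‖ < 1 := norm_div_lt_one_of_norm_lt hk
  constructor
  · rintro ⟨ψ, hψ, hψy⟩
    have hbψ := (isSchur_blaschkeFactor (hlam k)).mul hψ
    have hc' : ‖-c‖ < 1 := by rwa [norm_neg]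
    refine ⟨_, hbψ.blaschkeFactor_comp hc', fun i => ?_⟩
    have hden := one_sub_conj_mul_ne_zero hc' (hbψ.norm_le_one _ (hmem i))
    rw [blaschkeFactor, mul_div_assoc', div_eq_iff hden, map_neg]
    linear_combination hψy i
  · rintro ⟨φ, hφ, hφy⟩
    have hφk : φ (lam k) = c := by rw [hc_def, ← hφy k, mul_div_cancel_left₀ _ hxk]
    obtain ⟨ψ, hψ, hφψ⟩ := (hφ.blaschkeFactor_comp hc).exists_eq_blaschkeFactor_mul (hlam k)
      (by simp [hφk])
    refine ⟨ψ, hψ, fun i => ?_⟩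
    have hden := one_sub_conj_mul_ne_zero hc (hφ.norm_le_one _ (hmem i))
    have h := hφψ _ (hmem i)
    rw [blaschkeFactor, div_eq_iff hden] at h
    rw [← hφy i]
    linear_combination -x i * h

theorem schurStep_mul_conj_sub_mul_conj (hlam : ∀ i, ‖lam i‖ < 1) (i j : ι) :
    schurStepLeft lam x y k i * conj (schurStepLeft lam x y k j) -
        schurStepRight x y k i * conj (schurStepRight x y k j) =
      (1 - y k / x k * conj (y k / x k)) * (x i * conj (x j) - y i * conj (y j)) -
        (1 - lam k * conj (lam k)) * (1 - lam i * conj (lam j)) /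
            ((1 - lam i * conj (lam k)) * (1 - lam k * conj (lam j))) *
          ((x i - conj (y k / x k) * y i) * conj (x j - conj (y k / x k) * y j)) := by
  have hb := one_sub_blaschkeFactor_mul_conj (hlam k) (hlam i).le (hlam j).le
  rw [mul_comm (conj (lam k))] at hb
  simp only [schurStepLeft, schurStepRight, map_mul, map_sub, Complex.conj_conj]
  linear_combination
    -(x i - conj (y k / x k) * y i) * (conj (x j) - y k / x k * conj (y j)) * hb

theorem pickMatrix_apply_pivot_right (hk : x k ≠ 0) (i : ι) :
    pickMatrix lam x y i k =
      conj (x k) * (x i - conj (y k / x k) * y i) / (1 - lam i * conj (lam k)) := by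
  have hk' : conj (x k) ≠ 0 := by simpa using hk
  rw [pickMatrix, of_apply, map_div₀]
  field_simp

theorem pickMatrix_apply_pivot_left (hk : x k ≠ 0) (j : ι) :
    pickMatrix lam x y k j =
      x k * conj (x j - conj (y k / x k) * y j) / (1 - lam k * conj (lam j)) := by
  rw [← (isHermitian_pickMatrix lam x y).apply, pickMatrix_apply_pivot_right hk]
  simp [mul_comm]

theorem pickMatrix_apply_pivot_self (hk : x k ≠ 0) :
    pickMatrix lam x y k k =
      x k * conj (x k) * (1 - y k / x k * conj (y k / x k)) / (1 - lam k * conj (lam k)) := by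
  have hk' : conj (x k) ≠ 0 := by simpa using hk
  rw [pickMatrix, of_apply, map_div₀]
  field_simp

theorem pickMatrix_schurStep (hlam : ∀ i, ‖lam i‖ < 1) (hk : ‖y k‖ < ‖x k‖) :
    pickMatrix lam (schurStepLeft lam x y k) (schurStepRight x y k) =
      (1 - ‖y k / x k‖ ^ 2) • of fun i j => pickMatrix lam x y i j -
        pickMatrix lam x y i k * pickMatrix lam x y k j / pickMatrix lam x y k k := by
  have hxk : x k ≠ 0 := norm_pos_iff.mp ((norm_nonneg _).trans_lt hk)
  have hc : ‖y k / x k‖ < 1 := norm_div_lt_one_of_norm_lt hk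
  have hscale : ((1 - ‖y k / x k‖ ^ 2 : ℝ) : ℂ) = 1 - y k / x k * conj (y k / x k) := by
    rw [Complex.mul_conj']
    norm_cast
  ext i j
  rw [Matrix.smul_apply, of_apply, pickMatrix_apply_pivot_right hxk,
    pickMatrix_apply_pivot_left hxk, pickMatrix_apply_pivot_self hxk, Complex.real_smul, hscale,
    pickMatrix, of_apply, schurStep_mul_conj_sub_mul_conj hlam, pickMatrix, of_apply]
  have hij := one_sub_mul_conj_ne_zero (hlam i) (hlam j).le
  have hkj := one_sub_mul_conj_ne_zero (hlam k) (hlam j).le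
  have hxk' : conj (x k) ≠ 0 := by simpa using hxk
  have hcc := one_sub_mul_conj_ne_zero hc hc.le
  generalize y k / x k = c at *
  generalize conj (x j - conj c * y j) = d
  field_simp

theorem posSemidef_pickMatrix_schurStep_iff [Finite ι] (hlam : ∀ i, ‖lam i‖ < 1)
    (hk : ‖y k‖ < ‖x k‖) :
    (pickMatrix lam (schurStepLeft lam x y k) (schurStepRight x y k)).PosSemidef ↔
      (pickMatrix lam x y).PosSemidef := by
  have hscale : 0 < 1 - ‖y k / x k‖ ^ 2 :=
    sub_pos.mpr (pow_lt_one₀ (norm_nonneg _) (norm_div_lt_one_of_norm_lt hk) two_ne_zero)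
  have hdiag : 0 < pickMatrix lam x y k k := by
    rw [pickMatrix_apply_self, Complex.zero_lt_real]
    exact div_pos (sub_pos.mpr (pow_lt_pow_left₀ hk (norm_nonneg _) two_ne_zero))
      (sub_pos.mpr (pow_lt_one₀ (norm_nonneg _) (hlam k) two_ne_zero))
  rw [posSemidef_iff_posSemidef_schurComplement (isHermitian_pickMatrix lam x y) hdiag,
    pickMatrix_schurStep hlam hk]
  exact posSemidef_smul_iff hscale

theorem support_schurStepLeft_ssubset (hle : ∀ i, ‖y i‖ ≤ ‖x i‖) (hk : ‖y k‖ < ‖x k‖) :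
    Function.support (schurStepLeft lam x y k) ⊂ Function.support x := by
  have hxk : x k ≠ 0 := norm_pos_iff.mp ((norm_nonneg _).trans_lt hk)
  have hk0 : k ∉ Function.support (schurStepLeft lam x y k) := by simp [schurStepLeft]
  refine (Set.ssubset_iff_of_subset ?_).mpr ⟨k, hxk, hk0⟩
  refine Function.support_subset_iff'.mpr fun i hi => ?_
  have hxi : x i = 0 := Function.notMem_support.mp hi
  have hyi : y i = 0 := by simpa [hxi] using hle i
  simp [schurStepLeft, hxi, hyi]

theorem pick_theorem_disk_general [Finite ι] (lam x y : ι → ℂ) (hlam : ∀ i, ‖lam i‖ < 1) :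
    HasSchurInterpolant lam x y ↔ (pickMatrix lam x y).PosSemidef := by
  induction hs : Function.support x using WellFoundedLT.induction generalizing x y with
  | ind s ih =>
    subst hs
    by_cases hle : ∀ i, ‖y i‖ ≤ ‖x i‖
    · by_cases hlt : ∃ k, ‖y k‖ < ‖x k‖
      · obtain ⟨k, hk⟩ := hlt
        rw [← hasSchurInterpolant_schurStep_iff hlam hk,
          ← posSemidef_pickMatrix_schurStep_iff hlam hk]
        exact ih _ (support_schurStepLeft_ssubset hle hk) _ _ rfl
      · push Not at hlt
        have heq (i : ι) : ‖y i‖ = ‖x i‖ := (hle i).antisymm (hlt i)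
        rw [hasSchurInterpolant_iff_of_norm_eq hlam heq,
          posSemidef_pickMatrix_iff_of_norm_eq hlam heq]
    · exact iff_of_false (fun h => hle (h.norm_le hlam))
        fun h => hle (norm_le_of_posSemidef_pickMatrix h hlam)

end TangentialProblem

/-- **Pick's interpolation theorem on the disk.** Given distinct points `λ₁, …, λ_N ∈ 𝔻`
and targets `w₁, …, w_N ∈ ℂ`, there is an analytic `φ : 𝔻 → ℂ` with `sup_𝔻 |φ| ≤ 1` and
`φ(λᵢ) = wᵢ` if and only if the Pick matrix `[(1 - wᵢw̄ⱼ)/(1 - λᵢλ̄ⱼ)]` is positive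
semi-definite. -/
theorem pick_theorem_disk {N : ℕ} (lam : Fin N → ℂ) (w : Fin N → ℂ)
    (hlam : ∀ i, lam i ∈ ball (0 : ℂ) 1) (hdist : Function.Injective lam) :
    (∃ φ : ℂ → ℂ, DifferentiableOn ℂ φ (ball (0 : ℂ) 1) ∧
      (∀ z ∈ ball (0 : ℂ) 1, ‖φ z‖ ≤ 1) ∧ ∀ i, φ (lam i) = w i) ↔
    (Matrix.of fun i j : Fin N =>
        (1 - w i * starRingEnd ℂ (w j)) / (1 - lam i * starRingEnd ℂ (lam j))).PosSemidef := by
  simpa [HasSchurInterpolant, pickMatrix, isSchur_iff, and_assoc] using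
    pick_theorem_disk_general lam 1 w fun i => mem_ball_zero_iff.mp (hlam i)
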